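/- arXiv:0811.1290 — 2 statements merged into one kernel-verified Lean document; each statement's English description precedes it below -/
import Mathlib

section
/- Let β be a dimension vector of Q and σ ∈ ℤ^{Q_0} an integral weight. Then there exists a σ-semi-stable representation of Q of dimension vector β if and only if σ(β)=0 and σ(β')≤0 for every dimension vector β' with β' ↪ β. -/
set_option autoImplicit false

noncomputable section

open scoped BigOperators

/-! Basic setup for representations of a quiver with vertex set `V`, arrow set `A`,
tail map `t` and head map `h`, over a field `K`. -/

variable (K : Type) [Field K]
variable {V A : Type} [Fintype V] [DecidableEq V] [Fintype A]

/-- The Euler form of the quiver `(V, A, t, h)`. -/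
def eulerForm {R : Type} [CommRing R] (t h : A → V) (x y : V → R) : R :=
  ∑ i, x i * y i - ∑ a, x (t a) * y (h a)

def natZ (x : V → ℕ) : V → ℤ := fun i => (x i : ℤ)
def intQ (x : V → ℤ) : V → ℚ := fun i => (x i : ℚ)
def natQ (x : V → ℕ) : V → ℚ := fun i => (x i : ℚ)

/-- The weight `⟨α,·⟩`. -/
def weightL (t h : A → V) (α : V → ℤ) : V → ℤ :=
  fun i => eulerForm t h α (fun j => if j = i then 1 else 0)

/-- The weight `−⟨·,α⟩`. -/
def weightR (t h : A → V) (α : V → ℤ) : V → ℤ :=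
  fun i => - eulerForm t h (fun j => if j = i then 1 else 0) α

/-- `IsPathFrom t h i p j` : the list of arrows `p` is a path from `i` to `j`. -/
def IsPathFrom (t h : A → V) : V → List A → V → Prop
  | i, [], j => i = j
  | i, a :: p, j => t a = i ∧ IsPathFrom t h (h a) p j

/-- The quiver has no (nontrivial) oriented cycles. -/
def Acyclic (t h : A → V) : Prop := ∀ (i : V) (p : List A), IsPathFrom t h i p i → p = []

/-- The dimension vector `γ_i` of the projective indecomposable at `i`:
`γ_i(j)` is the number of paths from `i` to `j`. -/
def gammaRoot (t h : A → V) (i : V) : V → ℕ :=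
  fun j => Set.ncard {p : List A | IsPathFrom t h i p j}

/-- A finite-dimensional representation of the quiver `(V, A, t, h)` over `K`. -/
structure QuivRep (K : Type) [Field K] (V A : Type) (t h : A → V) : Type 1 where
  sp : V → Type
  [inst1 : ∀ i, AddCommGroup (sp i)]
  [inst2 : ∀ i, Module K (sp i)]
  [inst3 : ∀ i, FiniteDimensional K (sp i)]
  map : ∀ a : A, sp (t a) →ₗ[K] sp (h a)

attribute [instance] QuivRep.inst1 QuivRep.inst2 QuivRep.inst3

namespace QuivRep

variable {K} {t h : A → V}

/-- The dimension vector of a representation. -/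
def dimVec (X : QuivRep K V A t h) : V → ℕ := fun i => Module.finrank K (X.sp i)

/-- A subrepresentation. -/
structure Sub (X : QuivRep K V A t h) where
  sub : ∀ i, Submodule K (X.sp i)
  le : ∀ a : A, ∀ x ∈ sub (t a), X.map a x ∈ sub (h a)

/-- The dimension vector of a subrepresentation. -/
def Sub.dimVec {X : QuivRep K V A t h} (U : Sub X) : V → ℕ :=
  fun i => Module.finrank K (U.sub i)

/-- The space `Hom_Q(X,Y)` of morphisms of representations, as a submodule of
`Π i, Hom_K(X(i),Y(i))`. -/
def homS (X Y : QuivRep K V A t h) : Submodule K (∀ i, X.sp i →ₗ[K] Y.sp i) where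
  carrier := {φ | ∀ a : A, (φ (h a)).comp (X.map a) = (Y.map a).comp (φ (t a))}
  zero_mem' := by intro a; simp
  add_mem' := by
    intro f g hf hg a
    simp only [Pi.add_apply, LinearMap.add_comp, LinearMap.comp_add, hf a, hg a]
  smul_mem' := by
    intro c f hf a
    simp only [Pi.smul_apply, LinearMap.smul_comp, LinearMap.comp_smul, hf a]

/-- The dimension of `Hom_Q(X,Y)`. -/
def homDim (X Y : QuivRep K V A t h) : ℕ := Module.finrank K (homS X Y)

/-- The map `d^X_Y` from Ringel's canonical exact sequence. -/
def dmap (X Y : QuivRep K V A t h) :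
    (∀ i, X.sp i →ₗ[K] Y.sp i) →ₗ[K] (∀ a : A, X.sp (t a) →ₗ[K] Y.sp (h a)) where
  toFun φ := fun a => (φ (h a)).comp (X.map a) - (Y.map a).comp (φ (t a))
  map_add' f g := by
    funext a
    simp only [Pi.add_apply, LinearMap.add_comp, LinearMap.comp_add]
    abel
  map_smul' c f := by
    funext a
    simp only [Pi.smul_apply, LinearMap.smul_comp, LinearMap.comp_smul, smul_sub,
      RingHom.id_apply]

/-- The dimension of `Ext^1_Q(X,Y)`, i.e. of the cokernel of `d^X_Y`. -/
def extDim (X Y : QuivRep K V A t h) : ℕ :=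
  Module.finrank K ((∀ a : A, X.sp (t a) →ₗ[K] Y.sp (h a)) ⧸ LinearMap.range (dmap X Y))

/-- A rigid representation: `Ext^1_Q(X,X) = 0`. -/
def IsRigid (X : QuivRep K V A t h) : Prop := extDim X X = 0

/-- A Schur representation: `End_Q(X) = K·id`. -/
def IsSchur (X : QuivRep K V A t h) : Prop := homDim X X = 1

/-- An exceptional representation: rigid and Schur. -/
def IsExceptional (X : QuivRep K V A t h) : Prop := IsRigid X ∧ IsSchur X

end QuivRep

/-- `β` is a real Schur root: the dimension vector of an exceptional representation. -/
def isRealSchurRoot (t h : A → V) (β : V → ℕ) : Prop :=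
  ∃ X : QuivRep K V A t h, X.dimVec = β ∧ X.IsExceptional

/-- `ext_Q(α,β)` : the generic (minimal) value of `dim Ext^1_Q` on pairs of
representations of dimension vectors `α`, `β`. -/
def extMin (t h : A → V) (α β : V → ℕ) : ℕ :=
  sInf {n | ∃ X Y : QuivRep K V A t h, X.dimVec = α ∧ Y.dimVec = β ∧ QuivRep.extDim X Y = n}

/-- `hom_Q(α,β)` : the generic (minimal) value of `dim Hom_Q`. -/
def homMin (t h : A → V) (α β : V → ℕ) : ℕ :=
  sInf {n | ∃ X Y : QuivRep K V A t h, X.dimVec = α ∧ Y.dimVec = β ∧ QuivRep.homDim X Y = n}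

/-- `β' ↪ β` : every representation of dimension vector `β` has a subrepresentation of
dimension vector `β'`. -/
def Embeds (t h : A → V) (β' β : V → ℕ) : Prop :=
  ∀ X : QuivRep K V A t h, X.dimVec = β → ∃ U : QuivRep.Sub X, U.dimVec = β'

/-- `σ`-semi-stability of a representation. -/
def IsSemistable {t h : A → V} (σ : V → ℤ) (X : QuivRep K V A t h) : Prop :=
  (∑ i, σ i * (X.dimVec i : ℤ)) = 0 ∧
  ∀ U : QuivRep.Sub X, (∑ i, σ i * (U.dimVec i : ℤ)) ≤ 0

/-- `σ`-stability of a representation. -/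
def IsStable {t h : A → V} (σ : V → ℤ) (X : QuivRep K V A t h) : Prop :=
  (∑ i, σ i * (X.dimVec i : ℤ)) = 0 ∧ X.dimVec ≠ (fun _ => 0) ∧
  ∀ U : QuivRep.Sub X, U.dimVec ≠ (fun _ => 0) → U.dimVec ≠ X.dimVec →
    (∑ i, σ i * (U.dimVec i : ℤ)) < 0

/-- Isomorphism of representations. -/
def RepIso {t h : A → V} (X Y : QuivRep K V A t h) : Prop :=
  ∃ e : ∀ i, X.sp i ≃ₗ[K] Y.sp i,
    ∀ (a : A) (x : X.sp (t a)), e (h a) (X.map a x) = Y.map a (e (t a) x)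

/-- A quiver exceptional sequence of dimension vectors. -/
def IsQES (t h : A → V) {l : ℕ} (b : Fin l → V → ℕ) : Prop :=
  (∀ j, isRealSchurRoot K t h (b j)) ∧
  ∀ i j : Fin l, i < j →
    homMin K t h (b i) (b j) = 0 ∧ extMin K t h (b i) (b j) = 0 ∧
      eulerForm t h (natZ (b j)) (natZ (b i)) ≤ 0

/-- The cone of nonnegative rational linear combinations of a finite set of integral
vectors. -/
def coneOf (C : Finset (V → ℤ)) : Set (V → ℚ) :=
  {x | ∃ lam : (V → ℤ) → ℚ, (∀ c, 0 ≤ lam c) ∧ x = ∑ c ∈ C, lam c • intQ c}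

/-- A compatible subset of the set `Ψ(Q)_{≥ -1}` of almost positive real Schur roots. -/
def IsCompatible (t h : A → V) (C : Finset (V → ℤ)) : Prop :=
  (∀ x ∈ C, (∃ β : V → ℕ, isRealSchurRoot K t h β ∧ x = natZ β) ∨
      (∃ i : V, x = fun j => -(gammaRoot t h i j : ℤ))) ∧
  (∀ x ∈ C, ∀ y ∈ C, x ≠ y →
    (∀ β₁ β₂ : V → ℕ, isRealSchurRoot K t h β₁ → isRealSchurRoot K t h β₂ →
      x = natZ β₁ → y = natZ β₂ → extMin K t h β₁ β₂ = 0) ∧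
    (∀ (β : V → ℕ) (i : V), isRealSchurRoot K t h β →
      x = natZ β → y = (fun j => -(gammaRoot t h i j : ℤ)) → β i = 0))

/-- The domain of semi-invariants `D(β) ⊆ ℚ^{Q_0}`. -/
def Dom (t h : A → V) (β : V → ℕ) : Set (V → ℚ) :=
  {x | eulerForm t h x (natQ β) = 0 ∧
    ∀ β' : V → ℕ, Embeds K t h β' β → eulerForm t h x (natQ β') ≤ 0}

/-- A quiver exceptional set: a subset of `Ψ(Q)_{≥ -1}` of the form
`{β_1,…,β_l, −γ_{i_{l+1}},…,−γ_{i_m}}` with `β_j(i_k) = 0` and whose real-Schur-root part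
can be ordered into a quiver exceptional sequence. -/
def IsQExcSet (t h : A → V) (E : Finset (V → ℤ)) : Prop :=
  ∃ (l m : ℕ) (b : Fin l → V → ℕ) (g : Fin m → V),
    Function.Injective b ∧ Function.Injective g ∧ IsQES K t h b ∧
    (∀ j k, b j (g k) = 0) ∧
    (E : Set (V → ℤ)) =
      (Set.range fun j => natZ (b j)) ∪
      (Set.range fun k => (fun v => -(gammaRoot t h (g k) v : ℤ)))


/-- The underlying graph of the quiver is connected. -/
def IsConnectedQuiver (t h : A → V) : Prop :=
  ∀ i j : V,
    Relation.ReflTransGen (fun u v => ∃ a, (t a = u ∧ h a = v) ∨ (t a = v ∧ h a = u)) i j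

/-- Morphisms of representations. -/
structure RepHom {K : Type} [Field K] {V A : Type} {t h : A → V}
    (X Y : QuivRep K V A t h) : Type where
  app : ∀ i, X.sp i →ₗ[K] Y.sp i
  comm : ∀ a : A, (app (h a)).comp (X.map a) = (Y.map a).comp (app (t a))

namespace RepHom

variable {K₀ : Type} [Field K₀] {t h : A → V}

/-- The identity morphism. -/
def idHom (X : QuivRep K₀ V A t h) : RepHom X X :=
  ⟨fun _ => LinearMap.id, fun a => by ext x; simp⟩

/-- Composition of morphisms. -/
def comp {X Y Z : QuivRep K₀ V A t h} (f : RepHom X Y) (g : RepHom Y Z) : RepHom X Z :=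
  ⟨fun i => (g.app i).comp (f.app i), fun a => by
    ext x
    have hf := LinearMap.congr_fun (f.comm a) x
    have hg := LinearMap.congr_fun (g.comm a) (f.app (t a) x)
    simp only [LinearMap.comp_apply] at hf hg ⊢
    rw [hf, hg]⟩

/-- Sum of morphisms. -/
def add {X Y : QuivRep K₀ V A t h} (f g : RepHom X Y) : RepHom X Y :=
  ⟨fun i => f.app i + g.app i, fun a => by
    simp only [LinearMap.add_comp, LinearMap.comp_add, f.comm a, g.comm a]⟩

/-- Scalar multiple of a morphism. -/
def smul {X Y : QuivRep K₀ V A t h} (c : K₀) (f : RepHom X Y) : RepHom X Y :=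
  ⟨fun i => c • f.app i, fun a => by
    simp only [LinearMap.smul_comp, LinearMap.comp_smul, f.comm a]⟩

end RepHom

/-- The number of arrows `i → j` in the Ext-quiver `Q(𝓔)` of a sequence of dimension
vectors: `−⟨β_i, β_j⟩` for `i ≠ j`. -/
def extMult (t h : A → V) {l : ℕ} (b : Fin l → V → ℕ) (i j : Fin l) : ℕ :=
  if i = j then 0 else (-(eulerForm t h (natZ (b i)) (natZ (b j)))).toNat

/-- The arrow set of the Ext-quiver `Q(𝓔)`. -/
abbrev ExtArrow (t h : A → V) {l : ℕ} (b : Fin l → V → ℕ) : Type :=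
  (i : Fin l) × (j : Fin l) × Fin (extMult t h b i j)

/-- The representation space `rep(Q,β)` as a product of matrix spaces. -/
abbrev RepSpace (t h : A → V) (β : V → ℕ) : Type :=
  ∀ a : A, Matrix (Fin (β (h a))) (Fin (β (t a))) K

/-- The (base-change) action of `GL(β)` on `rep(Q,β)`. -/
def glAct (t h : A → V) {β : V → ℕ}
    (g : ∀ i, Matrix.GeneralLinearGroup (Fin (β i)) K) (W : RepSpace K t h β) :
    RepSpace K t h β :=
  fun a => (g (h a) : Matrix (Fin (β (h a))) (Fin (β (h a))) K) * W a *
    (((g (t a))⁻¹ : Matrix.GeneralLinearGroup (Fin (β (t a))) K) :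
      Matrix (Fin (β (t a))) (Fin (β (t a))) K)

/-- A polynomial function on `rep(Q,β)`. -/
def IsPolyFun (t h : A → V) {β : V → ℕ} (f : RepSpace K t h β → K) : Prop :=
  ∃ P : MvPolynomial ((a : A) × (Fin (β (h a)) × Fin (β (t a)))) K,
    ∀ W, f W = MvPolynomial.eval (fun x => W x.1 x.2.1 x.2.2) P

/-- The weight space `SI(Q,β)_σ` of semi-invariant polynomial functions of weight `σ`. -/
def SIweight (t h : A → V) (β : V → ℕ) (σ : V → ℤ) :
    Submodule K (RepSpace K t h β → K) where
  carrier := {f | IsPolyFun K t h f ∧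
    ∀ (g : ∀ i, Matrix.GeneralLinearGroup (Fin (β i)) K) (W : RepSpace K t h β),
      f (glAct K t h g W) =
        (((∏ i, (Matrix.GeneralLinearGroup.det (g i)) ^ σ i : Kˣ) : K)) * f W}
  zero_mem' := by
    refine ⟨⟨0, by simp⟩, by simp⟩
  add_mem' := by
    rintro f g ⟨⟨P, hP⟩, hf⟩ ⟨⟨Q, hQ⟩, hg⟩
    refine ⟨⟨P + Q, fun W => ?_⟩, fun gg W => ?_⟩
    · simp [hP W, hQ W]
    · simp only [Pi.add_apply, hf gg W, hg gg W]; ring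
  smul_mem' := by
    rintro c f ⟨⟨P, hP⟩, hf⟩
    refine ⟨⟨MvPolynomial.C c * P, fun W => ?_⟩, fun gg W => ?_⟩
    · simp [hP W]
    · simp only [Pi.smul_apply, hf gg W, smul_eq_mul]; ring

/-- Entry of a matrix accessed through natural-number indices. -/
def entryN {m n : ℕ} (M : Matrix (Fin m) (Fin n) K) (r c : ℕ) : K :=
  if hr : r < m then (if hc : c < n then M ⟨r, hr⟩ ⟨c, hc⟩ else 0) else 0

/-- The matrix of the map `d^V_W` (with `V` of dimension vector `α` varying and `W` of
dimension vector `w` fixed), in the standard bases. -/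
def schofieldMatrix (t h : A → V) {α w : V → ℕ}
    (Vm : RepSpace K t h α) (W : RepSpace K t h w) :
    Matrix ((a : A) × (Fin (w (h a)) × Fin (α (t a)))) ((i : V) × (Fin (w i) × Fin (α i))) K :=
  fun r c =>
    (if c.1 = h r.1 ∧ (c.2.1 : ℕ) = (r.2.1 : ℕ) then
      entryN K (Vm r.1) (c.2.2 : ℕ) (r.2.2 : ℕ) else 0)
    - (if c.1 = t r.1 ∧ (c.2.2 : ℕ) = (r.2.2 : ℕ) then
      entryN K (W r.1) (r.2.1 : ℕ) (c.2.1 : ℕ) else 0)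

/-- The Schofield semi-invariant `c_W : rep(Q,α) → K`, `V ↦ det d^V_W` (defined when
`⟨α, dim W⟩ = 0`, i.e. when `d^V_W` is a square matrix). -/
def schofieldSI (t h : A → V) {α w : V → ℕ} (W : RepSpace K t h w)
    (Vm : RepSpace K t h α) : K :=
  if hc : Fintype.card ((i : V) × (Fin (w i) × Fin (α i))) =
      Fintype.card ((a : A) × (Fin (w (h a)) × Fin (α (t a)))) then
    ((schofieldMatrix K t h Vm W).submatrix (Fintype.equivOfCardEq hc) id).det
  else 0

/-- The representation of `Q` attached to a point of `rep(Q,β)`. -/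
def toRep (t h : A → V) {β : V → ℕ} (W : RepSpace K t h β) : QuivRep K V A t h where
  sp i := Fin (β i) → K
  map a := Matrix.mulVecLin (W a)

/-- Over a ring: the representation given by the matrices `W` has a (split) subrepresentation
with dimension vector `γ`, spanned by the columns of the `N i`. -/
def SubData {V A : Type} (t h : A → V) {β : V → ℕ} (γ : V → ℕ) {R : Type} [CommRing R]
    (W : ∀ a : A, Matrix (Fin (β (h a))) (Fin (β (t a))) R)
    (N : ∀ i, Matrix (Fin (β i)) (Fin (γ i)) R)
    (P : ∀ i, Matrix (Fin (γ i)) (Fin (β i)) R) : Prop :=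
  (∀ i, P i * N i = 1) ∧ ∀ a, N (h a) * (P (h a) * (W a * N (t a))) = W a * N (t a)

lemma SubData.map {V A : Type} {t h : A → V} {β : V → ℕ} {γ : V → ℕ} {R S : Type} [CommRing R]
    [CommRing S] (f : R →+* S)
    {W : ∀ a : A, Matrix (Fin (β (h a))) (Fin (β (t a))) R}
    {N : ∀ i, Matrix (Fin (β i)) (Fin (γ i)) R}
    {P : ∀ i, Matrix (Fin (γ i)) (Fin (β i)) R} (H : SubData t h γ W N P) :
    SubData t h γ (fun a => (W a).map f) (fun i => (N i).map f) (fun i => (P i).map f) := by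
  refine ⟨fun i => ?_, fun a => ?_⟩
  · have := congrArg (fun M => M.map f) (H.1 i)
    simpa [Matrix.map_mul] using this
  · have := congrArg (fun M => M.map f) (H.2 a)
    simpa [Matrix.map_mul] using this

lemma SubData.of_map {V A : Type} {t h : A → V} {β : V → ℕ} {γ : V → ℕ} {R S : Type} [CommRing R]
    [CommRing S] (f : R →+* S) (hf : Function.Injective f)
    {W : ∀ a : A, Matrix (Fin (β (h a))) (Fin (β (t a))) R}
    {N : ∀ i, Matrix (Fin (β i)) (Fin (γ i)) R}
    {P : ∀ i, Matrix (Fin (γ i)) (Fin (β i)) R}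
    (H : SubData t h γ (fun a => (W a).map f) (fun i => (N i).map f) (fun i => (P i).map f)) :
    SubData t h γ W N P := by
  refine ⟨fun i => ?_, fun a => ?_⟩
  · apply Matrix.map_injective hf
    simpa [Matrix.map_mul] using H.1 i
  · apply Matrix.map_injective hf
    simpa [Matrix.map_mul] using H.2 a

lemma exists_minor_ne_zero {L : Type} [Field L] {n r : ℕ} (N : Matrix (Fin n) (Fin r) L)
    (P : Matrix (Fin r) (Fin n) L) (hPN : P * N = 1) :
    ∃ I : Fin r → Fin n, (N.submatrix I id).det ≠ 0 := by
  have hspan : Submodule.span L (Set.range N.row) = ⊤ := by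
    rw [eq_top_iff]
    rintro v -
    have hv : v = ∑ i, (Matrix.vecMul v P) i • N.row i := by
      have h1 : Matrix.vecMul (Matrix.vecMul v P) N = v := by
        rw [Matrix.vecMul_vecMul, hPN, Matrix.vecMul_one]
      exact h1.symm.trans (Matrix.vecMul_eq_sum _ _)
    rw [hv]
    exact Submodule.sum_mem _ fun i _ => Submodule.smul_mem _ _ (Submodule.subset_span ⟨i, rfl⟩)
  obtain ⟨κ, a, ha, hsp, hli⟩ := exists_linearIndependent' L N.row
  rw [hspan] at hsp
  have b := Module.Basis.mk hli hsp.ge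
  have e : Fin r ≃ κ := (Pi.basisFun L (Fin r)).indexEquiv b
  refine ⟨a ∘ e, ?_⟩
  have h2 : LinearIndependent L (N.submatrix (a ∘ e) id).row := hli.comp e e.injective
  rw [Matrix.linearIndependent_rows_iff_isUnit] at h2
  exact ((Matrix.isUnit_iff_isUnit_det _).1 h2).ne_zero

lemma exists_integral_chart {L : Type} [Field L] (O : ValuationSubring L) {n r : ℕ}
    (N : Matrix (Fin n) (Fin r) L) (P : Matrix (Fin r) (Fin n) L) (hPN : P * N = 1) :
    ∃ (N' : Matrix (Fin n) (Fin r) L) (I : Fin r → Fin n) (G : Matrix (Fin r) (Fin r) L),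
      (∀ i j, N' i j ∈ O) ∧ N' = N * G ∧
      ((1 : Matrix (Fin n) (Fin n) L).submatrix I id) * N' = 1 ∧
      N' * (((1 : Matrix (Fin n) (Fin n) L).submatrix I id) * N) = N := by
  obtain ⟨I₀, hI₀⟩ := exists_minor_ne_zero N P hPN
  have : Nonempty (Fin r → Fin n) := ⟨I₀⟩
  obtain ⟨I, hI⟩ := Finite.exists_max (fun I : Fin r → Fin n => O.valuation (N.submatrix I id).det)
  set M := N.submatrix I id with hM
  have hdet : M.det ≠ 0 := by
    intro h0
    have := hI I₀
    rw [h0, map_zero, le_zero_iff, map_eq_zero] at this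
    exact hI₀ this
  have hu : IsUnit M.det := hdet.isUnit
  have hsub : ∀ {m : ℕ} (X : Matrix (Fin n) (Fin m) L),
      ((1 : Matrix (Fin n) (Fin n) L).submatrix I id) * X = X.submatrix I id := by
    intro m X
    ext i j
    simp [Matrix.mul_apply, Matrix.one_apply]
  refine ⟨N * M⁻¹, I, M⁻¹, ?_, rfl, ?_, ?_⟩
  · intro i j
    have h1 : (N * M⁻¹) i j = (M.det)⁻¹ * (N.submatrix (Function.update I j i) id).det := by
      have h2 : (N.submatrix (Function.update I j i) id) = M.updateRow j (N i) := by
        ext x y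
        by_cases hx : x = j
        · subst hx; simp
        · simp [hx, hM]
      rw [h2, ← Matrix.cramer_transpose_apply, Matrix.cramer_eq_adjugate_mulVec,
        ← Matrix.adjugate_transpose, Matrix.inv_def, Ring.inverse_eq_inv']
      simp only [Matrix.mul_apply, Matrix.mulVec, dotProduct, Matrix.smul_apply, smul_eq_mul,
        Matrix.transpose_apply, Finset.mul_sum]
      refine Finset.sum_congr rfl fun x _ => by ring
    rw [← O.valuation_le_one_iff, h1, map_mul, map_inv₀]
    have h3 : O.valuation M.det ≠ 0 := by simpa using hdet
    calc _ ≤ (O.valuation M.det)⁻¹ * O.valuation M.det := by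
          gcongr
          exact hI _
      _ = 1 := inv_mul_cancel₀ h3
  · rw [← Matrix.mul_assoc, hsub, ← hM, Matrix.mul_nonsing_inv _ hu]
  · rw [hsub, ← hM, Matrix.mul_assoc, Matrix.nonsing_inv_mul _ hu, Matrix.mul_one]

lemma exists_algHom_of_fg {K R : Type} [Field K] [IsAlgClosed K] [CommRing R] [Algebra K R]
    [Algebra.FiniteType K R] (s : R) (hs : ¬ IsUnit s) : ∃ f : R →ₐ[K] K, f s = 0 := by
  obtain ⟨M, hM, hsM⟩ := exists_max_ideal_of_mem_nonunits hs
  let _ : Field (R ⧸ M) := Ideal.Quotient.field M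
  have := finite_of_finite_type_of_isJacobsonRing K (R ⧸ M)
  let g : (R ⧸ M) →ₐ[K] K := IsAlgClosed.lift
  refine ⟨g.comp (Ideal.Quotient.mkₐ K M), ?_⟩
  have : Ideal.Quotient.mk M s = 0 := Ideal.Quotient.eq_zero_iff_mem.2 hsM
  simp [this]

/-- Specialization: over a field extension `L` of `K` with an element `s` such that `s` is not a
unit in `K[s]`. -/
lemma specialize_subData {K L : Type} [Field K] [IsAlgClosed K] [Field L] [Algebra K L]
    {V A : Type} [Fintype V] (t h : A → V) {β γ : V → ℕ} (s : L)
    (hs : ∀ q : Polynomial K, s * Polynomial.aeval s q ≠ 1)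
    (X D : ∀ a : A, Matrix (Fin (β (h a))) (Fin (β (t a))) K)
    {N : ∀ i, Matrix (Fin (β i)) (Fin (γ i)) L}
    {P : ∀ i, Matrix (Fin (γ i)) (Fin (β i)) L}
    (H : SubData t h γ (fun a => (X a).map (algebraMap K L) + s • (D a).map (algebraMap K L)) N P) :
    ∃ N' P', SubData t h γ X N' P' := by
  -- the valuation ring
  let A₀ : Subalgebra K L := Algebra.adjoin K {s}
  have hsA : s ∈ A₀ := Algebra.subset_adjoin rfl
  let s₀ : A₀.toSubring := ⟨s, hsA⟩
  have hI : Ideal.span {s₀} ≠ ⊤ := by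
    rw [Ne, Ideal.span_singleton_eq_top]
    intro hu
    obtain ⟨⟨y, hy⟩, hxy⟩ := hu.exists_right_inv
    have hy' : y ∈ Algebra.adjoin K {s} := hy
    rw [Algebra.adjoin_singleton_eq_range_aeval] at hy'
    obtain ⟨q, hq⟩ := hy'
    apply hs q
    have : s * y = 1 := congrArg Subtype.val hxy
    rw [← this, ← hq]; rfl
  obtain ⟨O, hAO, hsO⟩ := Ideal.image_subset_nonunits_valuationSubring _ hI
  have hsO' : s ∈ O.nonunits := hsO ⟨s₀, Ideal.subset_span rfl, rfl⟩
  -- integral charts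
  choose N₁ I G hN₁O hN₁ hPN₁ hN₁N using fun i => exists_integral_chart O (N i) (P i) (H.1 i)
  have H₁ : SubData t h γ (fun a => (X a).map (algebraMap K L) + s • (D a).map (algebraMap K L))
      N₁ (fun i => (1 : Matrix (Fin (β i)) (Fin (β i)) L).submatrix (I i) id) := by
    refine ⟨hPN₁, fun a => ?_⟩
    have h2 := H.2 a
    beta_reduce at h2 ⊢
    generalize ((X a).map (algebraMap K L) + s • (D a).map (algebraMap K L)) = W at h2 ⊢
    have h3 : W * N₁ (t a) = N (h a) * (P (h a) * (W * N (t a)) * G (t a)) := by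
      rw [hN₁ (t a), ← Matrix.mul_assoc W, ← Matrix.mul_assoc (N (h a)), h2]
    rw [h3, ← Matrix.mul_assoc _ (N (h a)), ← Matrix.mul_assoc (N₁ (h a)), hN₁N]
  -- the finitely generated ring
  let T : Set L := {s} ∪ ⋃ i, ⋃ j, ⋃ k, {N₁ i j k}
  have hT : T.Finite := (Set.finite_singleton s).union
    (Set.finite_iUnion fun i => Set.finite_iUnion fun j => Set.finite_iUnion fun k =>
      Set.finite_singleton _)
  let R : Subalgebra K L := Algebra.adjoin K T
  have hRO : ∀ x ∈ R, x ∈ O := by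
    intro x hx
    induction hx using Algebra.adjoin_induction with
    | mem x hx =>
      rcases hx with hx | hx
      · rw [Set.mem_singleton_iff.1 hx]; exact hAO hsA
      · simp only [Set.mem_iUnion, Set.mem_singleton_iff] at hx
        obtain ⟨i, j, k, rfl⟩ := hx
        exact hN₁O i j k
    | algebraMap r => exact hAO (A₀.algebraMap_mem r)
    | add x y _ _ hx hy => exact add_mem hx hy
    | mul x y _ _ hx hy => exact mul_mem hx hy
  have hsR : s ∈ R := Algebra.subset_adjoin (Or.inl rfl)
  have hNR : ∀ i j k, N₁ i j k ∈ R := fun i j k => Algebra.subset_adjoin (Or.inr (by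
    simp only [Set.mem_iUnion, Set.mem_singleton_iff]; exact ⟨i, j, k, rfl⟩))
  have : Algebra.FiniteType K R := R.fg_iff_finiteType.1 (Subalgebra.fg_def.2 ⟨T, hT, rfl⟩)
  have hsu : ¬ IsUnit (⟨s, hsR⟩ : R) := by
    intro hu
    obtain ⟨⟨y, hy⟩, hxy⟩ := hu.exists_right_inv
    have h1 : s * y = 1 := congrArg Subtype.val hxy
    have h2 := hRO y hy
    rw [ValuationSubring.mem_nonunits_iff] at hsO'
    rw [← O.valuation_le_one_iff] at h2
    have h3 : O.valuation s * O.valuation y = 1 := by rw [← map_mul, h1, map_one]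
    have h4 : O.valuation s * O.valuation y < 1 := mul_lt_one_of_lt_of_le hsO' h2
    exact h4.ne h3
  obtain ⟨f, hf⟩ := exists_algHom_of_fg (K := K) (⟨s, hsR⟩ : R) hsu
  -- descend
  let NR : ∀ i, Matrix (Fin (β i)) (Fin (γ i)) R := fun i => Matrix.of fun j k => ⟨N₁ i j k, hNR i j k⟩
  let WR : ∀ a : A, Matrix (Fin (β (h a))) (Fin (β (t a))) R := fun a =>
    (X a).map (algebraMap K R) + (⟨s, hsR⟩ : R) • (D a).map (algebraMap K R)
  let PR : ∀ i, Matrix (Fin (γ i)) (Fin (β i)) R := fun i => (1 : Matrix (Fin (β i)) (Fin (β i)) R).submatrix (I i) id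
  have HR : SubData t h γ WR NR PR := by
    apply SubData.of_map (R.val : R →+* L) Subtype.val_injective
    have e1 : (fun a => (WR a).map (R.val : R →+* L)) =
        fun a => (X a).map (algebraMap K L) + s • (D a).map (algebraMap K L) := by
      funext a
      ext j k
      simp only [WR, Matrix.map_apply, Matrix.add_apply, Matrix.smul_apply, smul_eq_mul, map_add,
        map_mul]
      rfl
    have e2 : (fun i => (NR i).map (R.val : R →+* L)) = N₁ := rfl
    have e3 : (fun i => (PR i).map (R.val : R →+* L)) =
        fun i => (1 : Matrix (Fin (β i)) (Fin (β i)) L).submatrix (I i) id := by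
      funext i
      ext j k
      simp only [PR, Matrix.map_apply, Matrix.submatrix_apply, Matrix.one_apply]
      split_ifs <;> simp
    rw [e1, e2, e3]
    exact H₁
  have HK := HR.map (f : R →+* K)
  have e4 : (fun a => (WR a).map (f : R →+* K)) = X := by
    funext a
    ext j k
    simp only [WR, Matrix.map_apply, Matrix.add_apply, Matrix.smul_apply, smul_eq_mul, map_add,
      map_mul, RingHom.coe_coe, hf, zero_mul, add_zero, AlgHom.commutes, Algebra.algebraMap_self,
      RingHom.id_apply]
  rw [e4] at HK
  exact ⟨_, _, HK⟩

lemma line_specialize {K : Type} [Field K] [IsAlgClosed K]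
    {V A : Type} [Fintype V] (t h : A → V) {β γ : V → ℕ}
    (X D : ∀ a : A, Matrix (Fin (β (h a))) (Fin (β (t a))) K) (S : Set K) (hS : S.Infinite)
    (H : ∀ c ∈ S, ∃ N P, SubData t h γ (fun a => X a + c • D a) N P) :
    ∃ N P, SubData t h γ X N P := by
  choose! N P HNP using H
  let J : Ideal (S → K) :=
    { carrier := {f | {c | f c ≠ 0}.Finite}
      zero_mem' := by simp
      add_mem' := by
        intro f g hf hg
        refine (Set.Finite.union hf hg).subset ?_
        intro c hc
        by_contra hcon
        simp only [Set.mem_union, Set.mem_ofPred_eq, not_or, not_not] at hcon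
        exact hc (by simp [hcon.1, hcon.2])
      smul_mem' := by
        intro f g hg
        refine Set.Finite.subset hg ?_
        intro c hc h0
        exact hc (by simp [h0]) }
  have hJ : J ≠ ⊤ := by
    rw [Ne, Ideal.eq_top_iff_one]
    intro h1
    have h2 : {c : S | (1 : S → K) c ≠ 0}.Finite := h1
    have : Infinite S := hS.to_subtype
    simp only [Pi.one_apply, ne_eq, one_ne_zero, not_false_eq_true, Set.ofPred_true] at h2
    exact Set.infinite_univ h2
  obtain ⟨M, hM, hJM⟩ := J.exists_le_maximal hJ
  let _ : Field ((S → K) ⧸ M) := Ideal.Quotient.field M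
  have hzero : ∀ f : S → K, f ∈ M → ¬ {c | f c = 0}.Finite := by
    classical
    intro f hf hfin
    let g : S → K := fun c => if f c = 0 then 1 else 0
    have hg : g ∈ M := hJM (by
      refine Set.Finite.subset hfin ?_
      intro c hc
      by_contra h0
      exact hc (if_neg h0))
    have h1 : f + g ∈ M := M.add_mem hf hg
    have hu : IsUnit (f + g) := by
      rw [Pi.isUnit_iff]
      intro c
      simp only [Pi.add_apply, g]
      by_cases h0 : f c = 0
      · simp [h0]
      · simp [h0]
    exact hM.ne_top (M.eq_top_of_isUnit_mem h1 hu)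
  let φ : (S → K) →ₐ[K] ((S → K) ⧸ M) := Ideal.Quotient.mkₐ K M
  let s₀ : S → K := fun c => c
  let NS : ∀ i, Matrix (Fin (β i)) (Fin (γ i)) (S → K) := fun i => Matrix.of fun j k c => N c i j k
  let PS : ∀ i, Matrix (Fin (γ i)) (Fin (β i)) (S → K) := fun i => Matrix.of fun j k c => P c i j k
  have HS : SubData t h γ
      (fun a => (X a).map (algebraMap K (S → K)) + s₀ • (D a).map (algebraMap K (S → K))) NS PS := by
    refine ⟨fun i => ?_, fun a => ?_⟩
    · ext j k c
      have := congrFun (congrFun ((HNP c c.2).1 i) j) k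
      simp only [Matrix.mul_apply, Matrix.one_apply] at this
      simp only [Matrix.mul_apply, Finset.sum_apply, Matrix.one_apply, Pi.mul_apply, NS, PS,
        Matrix.of_apply, this]
      split_ifs <;> rfl
    · ext j k c
      have := congrFun (congrFun ((HNP c c.2).2 a) j) k
      simp only [Matrix.mul_apply, Matrix.add_apply, Matrix.smul_apply, smul_eq_mul] at this
      simp only [Matrix.mul_apply, Finset.sum_apply, Pi.mul_apply, NS, PS,
        Matrix.of_apply, Matrix.add_apply, Matrix.smul_apply, smul_eq_mul, Pi.add_apply,
        Matrix.map_apply, Pi.algebraMap_apply, s₀, Algebra.algebraMap_self, RingHom.id_apply, this]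
  have HL := HS.map (φ : (S → K) →+* ((S → K) ⧸ M))
  refine specialize_subData t h (L := (S → K) ⧸ M) (φ s₀) ?_ X D
    (N := fun i => (NS i).map (φ : (S → K) →+* ((S → K) ⧸ M)))
    (P := fun i => (PS i).map (φ : (S → K) →+* ((S → K) ⧸ M))) ?_
  · intro q hq
    have h1 : φ (s₀ * Polynomial.aeval s₀ q - 1) = 0 := by
      rw [map_sub, map_mul, ← Polynomial.aeval_algHom_apply, map_one, hq, sub_self]
    have h2 := hzero _ (Ideal.Quotient.eq_zero_iff_mem.1 h1)
    apply h2
    have hp : (Polynomial.X * q - 1 : Polynomial K) ≠ 0 := by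
      intro h0
      have := congrArg (Polynomial.eval 0) h0
      simp at this
    have h3 := Polynomial.finite_setOfPred_isRoot hp
    refine Set.Finite.subset (h3.preimage (f := (Subtype.val : S → K))
      Subtype.val_injective.injOn) ?_
    intro c hc
    have h4 : (Polynomial.aeval s₀ q) c = q.eval (c : K) := by
      have := Polynomial.aeval_algHom_apply (Pi.evalAlgHom K (fun _ : S => K) c) s₀ q
      simp only [Pi.evalAlgHom_apply] at this
      rw [← this, Polynomial.aeval_def, Polynomial.eval₂_eq_eval_map]
      simp [s₀]
    simp only [Set.mem_ofPred_eq, Pi.sub_apply, Pi.mul_apply, h4, Pi.one_apply] at hc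
    simpa [Polynomial.IsRoot, s₀] using hc
  · have e1 : (fun a => ((X a).map (algebraMap K (S → K)) +
          s₀ • (D a).map (algebraMap K (S → K))).map (φ : (S → K) →+* ((S → K) ⧸ M))) =
        fun a => (X a).map (algebraMap K ((S → K) ⧸ M)) +
          (φ s₀) • (D a).map (algebraMap K ((S → K) ⧸ M)) := by
      funext a
      ext j k
      simp only [Matrix.add_apply, Matrix.smul_apply, Matrix.map_apply, smul_eq_mul, map_add,
        map_mul]
      rfl
    rw [e1] at HL
    exact HL

/-- Simultaneous avoidance. -/
lemma exists_avoid {K : Type} [Field K] [IsAlgClosed K]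
    {V A : Type} [Fintype V] (t h : A → V) (β : V → ℕ) (F : Finset (V → ℕ))
    (H : ∀ γ ∈ F, ∃ X : (∀ a : A, Matrix (Fin (β (h a))) (Fin (β (t a))) K),
      ¬ ∃ N P, SubData t h γ X N P) :
    ∃ X : (∀ a : A, Matrix (Fin (β (h a))) (Fin (β (t a))) K),
      ∀ γ ∈ F, ¬ ∃ N P, SubData t h γ X N P := by
  classical
  induction F using Finset.induction_on with
  | empty => exact ⟨fun _ => 0, by simp⟩
  | insert γ F _ ih =>
    obtain ⟨Y, hY⟩ := ih fun δ hδ => H δ (Finset.mem_insert_of_mem hδ)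
    obtain ⟨X, hX⟩ := H γ (Finset.mem_insert_self _ _)
    have h1 : ∀ (δ : V → ℕ) (Z D : (∀ a : A, Matrix (Fin (β (h a))) (Fin (β (t a))) K)),
        (¬ ∃ N P, SubData t h δ Z N P) →
        {c : K | ∃ N P, SubData t h δ (fun a => Z a + c • D a) N P}.Finite := by
      intro δ Z D hZ
      by_contra hinf
      exact hZ (line_specialize t h Z D _ hinf fun c hc => hc)
    have h2 : ∀ δ ∈ F,
        {c : K | ∃ N P, SubData t h δ (fun a => X a + c • (Y a - X a)) N P}.Finite := by
      intro δ hδ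
      refine ((h1 δ Y (fun a => X a - Y a) (hY δ hδ)).preimage
        (f := fun c : K => 1 - c) (sub_right_injective.injOn)).subset ?_
      rintro c ⟨N, P, hNP⟩
      refine ⟨N, P, ?_⟩
      convert hNP using 2 with a
      module
    have h3 := (h1 γ X (fun a => Y a - X a) hX).union (F.finite_toSet.biUnion h2)
    have : Infinite K := IsAlgClosed.instInfinite
    obtain ⟨c, hc⟩ := h3.exists_notMem
    simp only [Set.mem_union, Set.mem_iUnion, not_or, not_exists, Set.mem_ofPred_eq] at hc
    refine ⟨fun a => X a + c • (Y a - X a), ?_⟩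
    intro δ hδ
    rcases Finset.mem_insert.1 hδ with rfl | hδ
    · rintro ⟨N, P, hNP⟩
      exact hc.1 N P hNP
    · rintro ⟨N, P, hNP⟩
      exact hc.2 δ hδ N P hNP

lemma exists_matrices {K : Type} [Field K] {V A : Type} {t h : A → V}
    (X : QuivRep K V A t h) (β : V → ℕ) (hX : X.dimVec = β) :
    ∃ W : (∀ a : A, Matrix (Fin (β (h a))) (Fin (β (t a))) K), ∀ γ : V → ℕ,
      (∃ N P, SubData t h γ W N P) → ∃ U : QuivRep.Sub X, U.dimVec = γ := by
  let b : ∀ i, Module.Basis (Fin (β i)) K (X.sp i) := fun i =>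
    Module.finBasisOfFinrankEq K (X.sp i) (congrFun hX i)
  refine ⟨fun a => LinearMap.toMatrix (b (t a)) (b (h a)) (X.map a), ?_⟩
  rintro γ ⟨N, P, h1, h2⟩
  have hinj : ∀ i, Function.Injective (Matrix.toLin (Pi.basisFun K (Fin (γ i))) (b i) (N i)) := by
    intro i
    apply Function.LeftInverse.injective
      (g := Matrix.toLin (b i) (Pi.basisFun K (Fin (γ i))) (P i))
    intro x
    rw [← LinearMap.comp_apply, ← Matrix.toLin_mul, h1]
    simp
  refine ⟨⟨fun i => LinearMap.range (Matrix.toLin (Pi.basisFun K (Fin (γ i))) (b i) (N i)), ?_⟩, ?_⟩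
  · rintro a _ ⟨x, rfl⟩
    refine ⟨Matrix.toLin (Pi.basisFun K _) (Pi.basisFun K _) (P (h a) *
      (LinearMap.toMatrix (b (t a)) (b (h a)) (X.map a) * N (t a))) x, ?_⟩
    rw [← LinearMap.comp_apply, ← Matrix.toLin_mul, h2, Matrix.toLin_mul _ (b (t a)),
      Matrix.toLin_toMatrix]
    rfl
  · funext i
    simp only [QuivRep.Sub.dimVec]
    rw [LinearMap.finrank_range_of_inj (hinj i)]
    simp

lemma subData_of_sub {K : Type} [Field K] {V A : Type} {t h : A → V} {β : V → ℕ}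
    (W : ∀ a : A, Matrix (Fin (β (h a))) (Fin (β (t a))) K)
    (U : QuivRep.Sub (toRep K t h W)) :
    ∃ N P, SubData t h U.dimVec W N P := by
  let S : ∀ i, Submodule K (Fin (β i) → K) := U.sub
  let b : ∀ i, Module.Basis (Fin (U.dimVec i)) K (S i) := fun i => Module.finBasis K (S i)
  have hr : ∀ i, ∃ r : (Fin (β i) → K) →ₗ[K] S i, r.comp (S i).subtype = LinearMap.id :=
    fun i => (S i).subtype.exists_leftInverse_of_injective (by simp)
  choose r hr using hr
  let e : ∀ i, Module.Basis (Fin (β i)) K (Fin (β i) → K) := fun i => Pi.basisFun K _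
  have hW : ∀ a, W a = LinearMap.toMatrix (e (t a)) (e (h a)) (Matrix.mulVecLin (W a)) := by
    intro a
    simp only [e]
    rw [← Matrix.toLin'_apply', ← Matrix.toLin_eq_toLin', LinearMap.toMatrix_toLin]
  refine ⟨fun i => LinearMap.toMatrix (b i) (e i) (S i).subtype,
    fun i => LinearMap.toMatrix (e i) (b i) (r i), fun i => ?_, fun a => ?_⟩
  · rw [← LinearMap.toMatrix_comp, hr, LinearMap.toMatrix_id]
  · rw [hW a, ← LinearMap.toMatrix_comp, ← LinearMap.toMatrix_comp, ← LinearMap.toMatrix_comp]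
    congr 1
    ext1 x
    have hx : Matrix.mulVecLin (W a) x ∈ S (h a) := U.le a x.1 x.2
    have := LinearMap.congr_fun (hr (h a)) ⟨_, hx⟩
    simpa using congrArg Subtype.val this

/-- There exists a `σ`-semi-stable representation of dimension vector `β`
iff `σ(β) = 0` and `σ(β') ≤ 0` for every `β' ↪ β`. -/
theorem stmt0 [IsAlgClosed K] [CharZero K] (t h : A → V) (hQ : Acyclic t h)
    (β : V → ℕ) (σ : V → ℤ) :
    (∃ W : QuivRep K V A t h, W.dimVec = β ∧ IsSemistable K σ W) ↔
      ((∑ i, σ i * (β i : ℤ)) = 0 ∧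
        ∀ β' : V → ℕ, Embeds K t h β' β → (∑ i, σ i * (β' i : ℤ)) ≤ 0) := by
  constructor
  · rintro ⟨W, rfl, h1, h2⟩
    refine ⟨h1, fun β' hβ' => ?_⟩
    obtain ⟨U, rfl⟩ := hβ' W rfl
    exact h2 U
  · rintro ⟨h1, h2⟩
    obtain ⟨W, hW⟩ := exists_avoid (K := K) t h β
      ((Finset.Iic β).filter fun γ => 0 < ∑ i, σ i * (γ i : ℤ)) (by
        intro γ hγ
        have hpos := (Finset.mem_filter.1 hγ).2
        have hne : ¬ Embeds K t h γ β := fun hE => absurd (h2 γ hE) (not_le.2 hpos)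
        simp only [Embeds, not_forall] at hne
        obtain ⟨X, hX, hno⟩ := hne
        obtain ⟨W, hW⟩ := exists_matrices X β hX
        exact ⟨W, fun hc => hno (hW γ hc)⟩)
    have hdim : (toRep K t h W).dimVec = β := by
      funext i
      change Module.finrank K (Fin (β i) → K) = β i
      simp
    refine ⟨toRep K t h W, hdim, by rw [hdim]; exact h1, fun U => ?_⟩
    by_contra hcon
    refine hW U.dimVec ?_ (subData_of_sub W U)
    refine Finset.mem_filter.2 ⟨Finset.mem_Iic.2 fun i => ?_, not_le.1 hcon⟩
    exact (Submodule.finrank_le (U.sub i)).trans (congrFun hdim i).le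

end
end

section
/- Let α be a pre-homogeneous dimension vector of Q and let σ be either the weight ⟨α,·⟩ or the weight −⟨·,α⟩. If δ is a dimension vector that admits a σ-stable representation, then δ is a real Schur root of Q. -/
set_option autoImplicit false

noncomputable section

open scoped BigOperators

/-! Basic setup for representations of a quiver with vertex set `V`, arrow set `A`,
tail map `t` and head map `h`, over a field `K`. -/

variable (K : Type) [Field K]
variable {V A : Type} [Fintype V] [DecidableEq V] [Fintype A]

/-! ### Auxiliary material for the proof of `stmt2`. -/

section Aux

set_option linter.unusedSectionVars false
set_option linter.unusedSimpArgs false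

variable {K} {t h : A → V}

open QuivRep

/-- Vanishing of `Ext^1`. -/
def ExtZ (X Y : QuivRep K V A t h) : Prop :=
  ∀ ξ : ∀ a : A, X.sp (t a) →ₗ[K] Y.sp (h a), ∃ φ : ∀ i, X.sp i →ₗ[K] Y.sp i,
    ∀ a x, φ (h a) (X.map a x) - Y.map a (φ (t a) x) = ξ a x

/-- Vanishing of `Hom`. -/
def HomZ (X Y : QuivRep K V A t h) : Prop :=
  ∀ φ ∈ homS X Y, φ = 0

theorem mem_homS' {X Y : QuivRep K V A t h} {φ : ∀ i, X.sp i →ₗ[K] Y.sp i} :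
    φ ∈ homS X Y ↔ ∀ a x, φ (h a) (X.map a x) = Y.map a (φ (t a) x) := by
  constructor
  · intro hφ a x
    exact LinearMap.congr_fun (hφ a) x
  · intro hφ a
    ext x
    exact hφ a x

theorem extDim_eq_zero {X Y : QuivRep K V A t h} : extDim X Y = 0 ↔ ExtZ X Y := by
  unfold extDim ExtZ
  rw [Module.finrank_zero_iff, Submodule.Quotient.subsingleton_iff, LinearMap.range_eq_top]
  constructor
  · intro H ξ
    obtain ⟨φ, hφ⟩ := H ξ
    refine ⟨φ, fun a x => ?_⟩
    rw [← hφ]; rfl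
  · intro H ξ
    obtain ⟨φ, hφ⟩ := H ξ
    refine ⟨φ, ?_⟩
    funext a
    ext x
    exact hφ a x

theorem homDim_eq_zero {X Y : QuivRep K V A t h} : homDim X Y = 0 ↔ HomZ X Y := by
  unfold homDim HomZ
  rw [Submodule.finrank_eq_zero, Submodule.eq_bot_iff]

theorem homS_eq_ker (X Y : QuivRep K V A t h) : homS X Y = LinearMap.ker (dmap X Y) := by
  ext φ
  rw [LinearMap.mem_ker]
  constructor
  · intro hφ
    funext a
    exact sub_eq_zero.mpr (hφ a)
  · intro hφ a
    exact sub_eq_zero.mp (congrFun hφ a)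

theorem euler_hom_ext (X Y : QuivRep K V A t h) :
    (∑ i, weightL t h (natZ X.dimVec) i * (Y.dimVec i : ℤ)) = homDim X Y - extDim X Y := by
  have h1 := LinearMap.finrank_range_add_finrank_ker (dmap X Y)
  have h2 := Submodule.finrank_quotient_add_finrank (LinearMap.range (dmap X Y))
  rw [Module.finrank_pi_fintype] at h1 h2
  simp only [Module.finrank_linearMap] at h1 h2
  rw [← homS_eq_ker] at h1
  change _ + homDim X Y = _ at h1
  change extDim X Y + _ = _ at h2
  have h3 : (∑ i, weightL t h (natZ X.dimVec) i * (Y.dimVec i : ℤ))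
      = (∑ i, (Module.finrank K (X.sp i) * Module.finrank K (Y.sp i) : ℕ) : ℕ)
        - (∑ a, (Module.finrank K (X.sp (t a)) * Module.finrank K (Y.sp (h a)) : ℕ) : ℕ) := by
    simp only [weightL, eulerForm, natZ, dimVec, sub_mul, Finset.sum_sub_distrib]
    congr 1
    · simp
    · push_cast
      simp only [Finset.sum_mul]
      rw [Finset.sum_comm]
      simp
  rw [h3, ← h1, ← h2]
  push_cast
  ring

/-- A subrepresentation as a representation. -/
abbrev subRep {X : QuivRep K V A t h} (U : Sub X) : QuivRep K V A t h where
  sp i := U.sub i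
  map a := ((X.map a).comp (U.sub (t a)).subtype).codRestrict (U.sub (h a))
    (fun x => U.le a x x.2)

theorem subRep_map_coe {X : QuivRep K V A t h} (U : Sub X) (a : A) (x : U.sub (t a)) :
    (((subRep U).map a x : U.sub (h a)) : X.sp (h a)) = X.map a (x : X.sp (t a)) := rfl

/-- Inclusion of a subrepresentation. -/
def subIncl {X : QuivRep K V A t h} (U : Sub X) : ∀ i, (subRep U).sp i →ₗ[K] X.sp i :=
  fun i => (U.sub i).subtype

theorem subIncl_mem {X : QuivRep K V A t h} (U : Sub X) : subIncl U ∈ homS (subRep U) X :=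
  mem_homS'.mpr fun _ _ => rfl

theorem subIncl_inj {X : QuivRep K V A t h} (U : Sub X) (i : V) :
    Function.Injective (subIncl U i) := Subtype.val_injective

theorem subRep_dimVec {X : QuivRep K V A t h} (U : Sub X) : (subRep U).dimVec = U.dimVec := rfl

/-- Range of a morphism. -/
def rangeSub {X Y : QuivRep K V A t h} (φ : ∀ i, X.sp i →ₗ[K] Y.sp i) (hφ : φ ∈ homS X Y) :
    Sub Y where
  sub i := LinearMap.range (φ i)
  le a := by
    rintro _ ⟨x, rfl⟩
    exact ⟨X.map a x, mem_homS'.mp hφ a x⟩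

/-- Kernel of a morphism. -/
def kerSub {X Y : QuivRep K V A t h} (φ : ∀ i, X.sp i →ₗ[K] Y.sp i) (hφ : φ ∈ homS X Y) :
    Sub X where
  sub i := LinearMap.ker (φ i)
  le a := by
    intro x hx
    rw [LinearMap.mem_ker] at hx ⊢
    rw [mem_homS'.mp hφ a x, hx, map_zero]

/-- Corestriction to the range. -/
def toRange {X Y : QuivRep K V A t h} (φ : ∀ i, X.sp i →ₗ[K] Y.sp i) (hφ : φ ∈ homS X Y) :
    ∀ i, X.sp i →ₗ[K] (subRep (rangeSub φ hφ)).sp i :=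
  fun i => (φ i).rangeRestrict

theorem toRange_mem {X Y : QuivRep K V A t h} (φ : ∀ i, X.sp i →ₗ[K] Y.sp i)
    (hφ : φ ∈ homS X Y) : toRange φ hφ ∈ homS X (subRep (rangeSub φ hφ)) :=
  mem_homS'.mpr fun a x => Subtype.ext (mem_homS'.mp hφ a x)

theorem toRange_surj {X Y : QuivRep K V A t h} (φ : ∀ i, X.sp i →ₗ[K] Y.sp i)
    (hφ : φ ∈ homS X Y) (i : V) : Function.Surjective (toRange φ hφ i) :=
  (φ i).surjective_rangeRestrict

/-- `Ext(X,-)` is right exact. -/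
theorem ExtZ.of_surj {X M N : QuivRep K V A t h} (H : ExtZ X M)
    (f : ∀ i, M.sp i →ₗ[K] N.sp i) (hf : f ∈ homS M N)
    (hs : ∀ i, Function.Surjective (f i)) : ExtZ X N := by
  intro ξ
  choose s hsec using fun i => (f i).exists_rightInverse_of_surjective
    (LinearMap.range_eq_top.mpr (hs i))
  obtain ⟨φ, hφ⟩ := H (fun a => (s (h a)).comp (ξ a))
  refine ⟨fun i => (f i).comp (φ i), fun a x => ?_⟩
  have h1 := congrArg (f (h a)) (hφ a x)
  have h2 := LinearMap.congr_fun (hsec (h a)) (ξ a x)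
  simp only [map_sub, LinearMap.comp_apply, LinearMap.id_apply] at h1 h2 ⊢
  rw [← mem_homS'.mp hf, h1, h2]

/-- `Ext(-,N)` is right exact. -/
theorem ExtZ.of_inj {L M N : QuivRep K V A t h} (H : ExtZ M N)
    (g : ∀ i, L.sp i →ₗ[K] M.sp i) (hg : g ∈ homS L M)
    (hi : ∀ i, Function.Injective (g i)) : ExtZ L N := by
  intro ξ
  choose r hr using fun i => (g i).exists_leftInverse_of_injective
    (LinearMap.ker_eq_bot.mpr (hi i))
  obtain ⟨φ, hφ⟩ := H (fun a => (ξ a).comp (r (t a)))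
  refine ⟨fun i => (φ i).comp (g i), fun a x => ?_⟩
  have h1 := hφ a (g (t a) x)
  have h2 := LinearMap.congr_fun (hr (t a)) x
  simp only [LinearMap.comp_apply, LinearMap.id_apply] at h1 h2 ⊢
  rw [mem_homS'.mp hg, h1, h2]

theorem ExtZ.ker {X R W : QuivRep K V A t h} (H : ExtZ X R) (hXW : HomZ X W)
    (f : ∀ i, R.sp i →ₗ[K] W.sp i) (hf : f ∈ homS R W) : ExtZ X (subRep (kerSub f hf)) := by
  intro ξ
  obtain ⟨φ, hφ⟩ := H (fun a => (subIncl (kerSub f hf) (h a)).comp (ξ a))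
  have h0 : (fun i => (f i).comp (φ i)) = 0 := by
    apply hXW
    rw [mem_homS']
    intro a x
    have h1 := congrArg (f (h a)) (hφ a x)
    have h2 : f (h a) (subIncl (kerSub f hf) (h a) (ξ a x)) = 0 := (ξ a x).2
    simp only [map_sub, LinearMap.comp_apply] at h1 ⊢
    rw [h2, sub_eq_zero] at h1
    rw [h1, mem_homS'.mp hf]
  refine ⟨fun i => (φ i).codRestrict (LinearMap.ker (f i)) (fun x => ?_), fun a x => ?_⟩
  · exact LinearMap.congr_fun (congrFun h0 i) x
  · exact Subtype.ext (hφ a x)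

theorem ExtZ.quot {R W : QuivRep K V A t h} (H : ExtZ R W)
    (f : ∀ i, R.sp i →ₗ[K] W.sp i) (hf : f ∈ homS R W)
    (hs : ∀ i, Function.Surjective (f i)) (hL : HomZ (subRep (kerSub f hf)) W) :
    ExtZ W W := by
  intro ξ
  choose s hsec using fun i => (f i).exists_rightInverse_of_surjective
    (LinearMap.range_eq_top.mpr (hs i))
  have hsec' : ∀ i w, f i (s i w) = w := fun i w => LinearMap.congr_fun (hsec i) w
  obtain ⟨φ, hφ⟩ := H (fun a => (ξ a).comp (f (t a)))
  have h0 : (fun i => (φ i).comp (subIncl (kerSub f hf) i)) = 0 := by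
    apply hL
    rw [mem_homS']
    intro a x
    have h1 := hφ a (subIncl (kerSub f hf) (t a) x)
    have h2 : f (t a) (subIncl (kerSub f hf) (t a) x) = 0 := x.2
    simp only [LinearMap.comp_apply] at h1 ⊢
    rw [h2, map_zero, sub_eq_zero] at h1
    rw [← h1]
    rfl
  have hk : ∀ i x, f i x = 0 → φ i x = 0 := fun i x hx =>
    LinearMap.congr_fun (congrFun h0 i) ⟨x, hx⟩
  have hfac : ∀ i x, φ i (s i (f i x)) = φ i x := by
    intro i x
    rw [← sub_eq_zero, ← map_sub]
    apply hk
    rw [map_sub, hsec', sub_self]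
  refine ⟨fun i => (φ i).comp (s i), fun a w => ?_⟩
  obtain ⟨x, rfl⟩ := hs _ w
  have h1 := hφ a x
  simp only [LinearMap.comp_apply] at h1 ⊢
  rw [hfac, ← mem_homS'.mp hf, hfac, h1]

/-- Powers of a representation. -/
abbrev powRep (n : ℕ) (X : QuivRep K V A t h) : QuivRep K V A t h where
  sp i := Fin n → X.sp i
  map a := LinearMap.pi fun b => (X.map a).comp (LinearMap.proj b)

theorem ExtZ.pow_right {X Y : QuivRep K V A t h} (H : ExtZ X Y) (n : ℕ) :
    ExtZ X (powRep n Y) := by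
  intro ξ
  choose φ hφ using fun b : Fin n => H (fun a => (LinearMap.proj b).comp (ξ a))
  exact ⟨fun i => LinearMap.pi fun b => φ b i, fun a x => funext fun b => hφ b a x⟩

theorem ExtZ.pow_left {X Y : QuivRep K V A t h} (H : ExtZ X Y) (n : ℕ) :
    ExtZ (powRep n X) Y := by
  intro ξ
  choose φ hφ using fun b : Fin n => H (fun a => (ξ a).comp (LinearMap.single K (fun _ : Fin n => X.sp (t a)) b))
  refine ⟨fun i => ∑ b, (φ b i).comp (LinearMap.proj b), fun a x => ?_⟩
  have hx : x = ∑ b, Pi.single b (x b) := (Finset.univ_sum_single x).symm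
  conv_rhs => rw [hx, map_sum]
  simp only [LinearMap.sum_apply, LinearMap.comp_apply, map_sum]
  rw [← Finset.sum_sub_distrib]
  exact Finset.sum_congr rfl fun b _ => hφ b a (x b)

/-- Extension of `Y` by `E` along a cocycle. -/
abbrev extRep (E Y : QuivRep K V A t h) (ξ : ∀ a : A, Y.sp (t a) →ₗ[K] E.sp (h a)) :
    QuivRep K V A t h where
  sp i := E.sp i × Y.sp i
  map a := ((E.map a).coprod (ξ a)).prod ((Y.map a).comp (LinearMap.snd K _ _))

theorem extRep_map (E Y : QuivRep K V A t h) (ξ : ∀ a : A, Y.sp (t a) →ₗ[K] E.sp (h a))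
    (a : A) (x : E.sp (t a) × Y.sp (t a)) :
    (extRep E Y ξ).map a x = (E.map a x.1 + ξ a x.2, Y.map a x.2) := rfl

theorem ExtZ.extRep {E Y W : QuivRep K V A t h} (hE : ExtZ E W) (hY : ExtZ Y W)
    (ξ : ∀ a : A, Y.sp (t a) →ₗ[K] E.sp (h a)) : ExtZ (extRep E Y ξ) W := by
  intro η
  obtain ⟨φ, hφ⟩ := hE (fun a => (η a).comp (LinearMap.inl K _ _))
  obtain ⟨ψ, hψ⟩ := hY (fun a => (η a).comp (LinearMap.inr K _ _) - (φ (h a)).comp (ξ a))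
  refine ⟨fun i => (φ i).coprod (ψ i), fun a x => ?_⟩
  rcases x with ⟨e, y⟩
  have h1 := hφ a e
  have h2 := hψ a y
  simp only [LinearMap.comp_apply, LinearMap.sub_apply, LinearMap.inl_apply,
    LinearMap.inr_apply] at h1 h2
  have h3 : η a (e, y) = η a (e, 0) + η a (0, y) := by
    rw [← map_add]; simp
  rw [h3]
  rw [extRep_map]
  simp only [LinearMap.coprod_apply, map_add]
  rw [← h1]
  have h4 : η a (0, y) = ψ (h a) (Y.map a y) - W.map a (ψ (t a) y) + φ (h a) (ξ a y) := by
    rw [h2]; abel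
  rw [h4]
  abel

theorem extRep_hom {E Y W : QuivRep K V A t h} (hE : ¬ HomZ E W) (hY : ExtZ Y W)
    (ξ : ∀ a : A, Y.sp (t a) →ₗ[K] E.sp (h a)) : ¬ HomZ (extRep E Y ξ) W := by
  intro H
  apply hE
  intro g hg
  obtain ⟨ψ, hψ⟩ := hY (fun a => - (g (h a)).comp (ξ a))
  have h0 := H (fun i => (g i).coprod (ψ i)) (by
    rw [mem_homS']
    rintro a ⟨e, y⟩
    have h1 := hψ a y
    simp only [LinearMap.comp_apply, LinearMap.neg_apply] at h1
    rw [extRep_map]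
    simp only [LinearMap.coprod_apply, map_add]
    rw [mem_homS'.mp hg, ← sub_eq_zero, ← neg_neg (g (h a) (ξ a y)), ← h1]
    abel)
  funext i
  ext e
  have := LinearMap.congr_fun (congrFun h0 i) (e, 0)
  simpa using this

/-- The universal (Bongartz) extension. -/
theorem bongartz (X E : QuivRep K V A t h) (hX : ExtZ X X) :
    ∃ (n : ℕ) (ξ : ∀ a : A, (powRep n X).sp (t a) →ₗ[K] E.sp (h a)),
      ExtZ X (extRep E (powRep n X) ξ) := by
  let B := Module.finBasis K (∀ a : A, X.sp (t a) →ₗ[K] E.sp (h a))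
  refine ⟨_, fun a => ∑ b, (B b a).comp (LinearMap.proj b), ?_⟩
  intro η
  obtain ⟨ψ, hψ⟩ := hX.pow_right _ (fun a => (LinearMap.snd K _ _).comp (η a))
  let ρ : ∀ a : A, X.sp (t a) →ₗ[K] E.sp (h a) := fun a =>
    (LinearMap.fst K _ _).comp (η a) +
      (∑ b, (B b a).comp (LinearMap.proj b)).comp (ψ (t a))
  have hρ : ∀ a x, ∑ b, B.repr ρ b • B b a x = ρ a x := by
    intro a x
    have := LinearMap.congr_fun (congrFun (B.sum_repr ρ) a) x
    simpa using this
  refine ⟨fun i => (0 : X.sp i →ₗ[K] E.sp i).prod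
    (ψ i - LinearMap.pi fun b => B.repr ρ b • LinearMap.id), fun a x => ?_⟩
  rw [extRep_map]
  have h1 := hψ a x
  have h2 := hρ a x
  refine Prod.ext ?_ ?_
  · have h5 : ρ a x = (η a x).1 + ∑ b, B b a (ψ (t a) x b) := by
      simp [ρ]
    have h6 : (∑ b, (B b a).comp (LinearMap.proj b) :
        (Fin _ → X.sp (t a)) →ₗ[K] E.sp (h a)) (fun b => ψ (t a) x b - B.repr ρ b • x)
        = - (η a x).1 := by
      simp only [LinearMap.sum_apply, LinearMap.comp_apply, LinearMap.proj_apply, map_sub,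
        map_smul, Finset.sum_sub_distrib]
      rw [h2, h5]
      abel
    change (0 : E.sp (h a)) - (E.map a (0 : E.sp (t a)) + (∑ b, (B b a).comp (LinearMap.proj b) :
        (Fin _ → X.sp (t a)) →ₗ[K] E.sp (h a)) (fun b => ψ (t a) x b - B.repr ρ b • x))
        = (η a x).1
    rw [h6, map_zero, zero_add, zero_sub, neg_neg]
  · funext b
    have h3 := congrFun h1 b
    simp only [LinearMap.comp_apply, LinearMap.snd_apply] at h3
    change _ = (η a x).2 b
    rw [← h3]
    change (ψ (h a) (X.map a x) b - B.repr ρ b • X.map a x) -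
      X.map a (ψ (t a) x b - B.repr ρ b • x) =
      ψ (h a) (X.map a x) b - X.map a (ψ (t a) x b)
    rw [map_sub, map_smul]
    abel

theorem dim_ne_zero_of_hom {R W : QuivRep K V A t h} (f : ∀ i, R.sp i →ₗ[K] W.sp i)
    (hf : f ∈ homS R W) (h0 : f ≠ 0) : (rangeSub f hf).dimVec ≠ fun _ => 0 := by
  intro H
  apply h0
  funext i
  have h1 : Module.finrank K (LinearMap.range (f i)) = 0 := congrFun H i
  rw [Submodule.finrank_eq_zero] at h1
  exact LinearMap.range_eq_bot.mp h1

theorem surj_of_dim {R W : QuivRep K V A t h} (f : ∀ i, R.sp i →ₗ[K] W.sp i)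
    (hf : f ∈ homS R W) (h0 : (rangeSub f hf).dimVec = W.dimVec) (i : V) :
    Function.Surjective (f i) :=
  LinearMap.range_eq_top.mp (Submodule.eq_top_of_finrank_eq (congrFun h0 i))

theorem perp_of_stable {X W : QuivRep K V A t h} (hX : ExtZ X X)
    (hW : IsStable K (weightL t h (natZ X.dimVec)) W) : HomZ X W ∧ ExtZ X W := by
  obtain ⟨hs0, hne, hst⟩ := hW
  have key : homDim X W = 0 := by
    by_contra hcon
    let B := Module.finBasis K (homS X W)
    let F : ∀ i, (powRep _ X).sp i →ₗ[K] W.sp i := fun i =>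
      ∑ b, ((B b).1 i).comp (LinearMap.proj b)
    have hF : F ∈ homS (powRep _ X) W := by
      rw [mem_homS']
      intro a x
      simp only [F, LinearMap.sum_apply, LinearMap.comp_apply, map_sum]
      exact Finset.sum_congr rfl fun b _ => mem_homS'.mp (B b).2 a (x b)
    have hI : ExtZ X (subRep (rangeSub F hF)) :=
      (hX.pow_right _).of_surj _ (toRange_mem F hF) (toRange_surj F hF)
    have hF0 : F ≠ 0 := by
      intro h0
      apply hcon
      rw [homDim_eq_zero]
      have hB : ∀ b, B b = 0 := by
        intro b
        apply Subtype.ext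
        funext i
        ext x
        have := LinearMap.congr_fun (congrFun h0 i) (Pi.single b x : Fin _ → X.sp i)
        simp only [F, LinearMap.sum_apply, LinearMap.comp_apply, LinearMap.proj_apply] at this
        rw [Finset.sum_eq_single b] at this
        · simpa using this
        · intro c _ hc
          simp [Pi.single_eq_of_ne hc]
        · simp
      intro φ hφ
      have := B.sum_repr ⟨φ, hφ⟩
      simp only [hB, smul_zero, Finset.sum_const_zero] at this
      exact (congrArg Subtype.val this).symm
    have h1 := euler_hom_ext X (subRep (rangeSub F hF))
    rw [extDim_eq_zero.mpr hI] at h1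
    by_cases hd : (rangeSub F hF).dimVec = W.dimVec
    · have hEW : ExtZ X W := (hX.pow_right _).of_surj F hF (surj_of_dim F hF hd)
      have h2 := euler_hom_ext X W
      rw [extDim_eq_zero.mpr hEW, hs0] at h2
      apply hcon
      omega
    · have h3 := hst _ (dim_ne_zero_of_hom F hF hF0) hd
      rw [← subRep_dimVec, h1] at h3
      omega
  refine ⟨homDim_eq_zero.mp key, ?_⟩
  have h2 := euler_hom_ext X W
  rw [hs0, key] at h2
  rw [← extDim_eq_zero]
  omega

theorem rigid_aux {X W : QuivRep K V A t h}
    (hW : IsStable K (weightL t h (natZ X.dimVec)) W) (hXW : HomZ X W) (n : ℕ) :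
    ∀ R : QuivRep K V A t h, (∑ i, R.dimVec i) ≤ n → ExtZ R W → ExtZ X R → ¬ HomZ R W →
      ExtZ W W := by
  induction n with
  | zero =>
    intro R hR _ _ hne
    exfalso
    apply hne
    intro f _
    funext i
    have h1 : R.dimVec i = 0 :=
      Finset.sum_eq_zero_iff.mp (Nat.le_zero.mp hR) i (Finset.mem_univ i)
    have : Subsingleton (R.sp i) := Module.finrank_zero_iff.mp h1
    ext x
    rw [Subsingleton.elim x 0, map_zero, map_zero]
  | succ n ih =>
    intro R hR hRW hXR hne
    unfold HomZ at hne
    push Not at hne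
    obtain ⟨f, hf, hf0⟩ := hne
    have hI : ExtZ X (subRep (rangeSub f hf)) :=
      hXR.of_surj _ (toRange_mem f hf) (toRange_surj f hf)
    have hHI : HomZ X (subRep (rangeSub f hf)) := by
      intro φ hφ
      have := hXW (fun i => (subIncl (rangeSub f hf) i).comp (φ i)) (by
        rw [mem_homS']
        intro a x
        simp only [LinearMap.comp_apply]
        rw [mem_homS'.mp hφ, mem_homS'.mp (subIncl_mem _)])
      funext i
      ext x
      exact LinearMap.congr_fun (congrFun this i) x
    have h1 := euler_hom_ext X (subRep (rangeSub f hf))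
    rw [extDim_eq_zero.mpr hI, homDim_eq_zero.mpr hHI] at h1
    have hd : (rangeSub f hf).dimVec = W.dimVec := by
      by_contra hd
      have h3 := hW.2.2 _ (dim_ne_zero_of_hom f hf hf0) hd
      rw [← subRep_dimVec, h1] at h3
      simp at h3
    have hs := surj_of_dim f hf hd
    by_cases hL : HomZ (subRep (kerSub f hf)) W
    · exact hRW.quot f hf hs hL
    · refine ih (subRep (kerSub f hf)) ?_ (hRW.of_inj _ (subIncl_mem _) (subIncl_inj _))
        (hXR.ker hXW f hf) hL
      have hle : ∀ i, (subRep (kerSub f hf)).dimVec i + W.dimVec i = R.dimVec i := by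
        intro i
        have h4 := LinearMap.finrank_range_add_finrank_ker (f i)
        rw [add_comm]
        rw [← congrFun hd i]
        exact h4
      have hsum : (∑ i, (subRep (kerSub f hf)).dimVec i) + (∑ i, W.dimVec i)
          = ∑ i, R.dimVec i := by
        rw [← Finset.sum_add_distrib]
        exact Finset.sum_congr rfl fun i _ => hle i
      have hpos : (∑ i, W.dimVec i) ≠ 0 := by
        intro h5
        apply hW.2.1
        funext i
        exact Finset.sum_eq_zero_iff.mp h5 i (Finset.mem_univ i)
      omega

theorem exists_path {i j : V}
    (H : Relation.TransGen (fun i j : V => ∃ a, t a = i ∧ h a = j) i j) :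
    ∃ p : List A, p ≠ [] ∧ IsPathFrom t h i p j := by
  induction H using Relation.TransGen.head_induction_on with
  | single hab =>
    obtain ⟨a, h1, h2⟩ := hab
    exact ⟨[a], by simp, h1, h2⟩
  | head hab _ ih =>
    obtain ⟨a, h1, rfl⟩ := hab
    obtain ⟨p, _, hp⟩ := ih
    exact ⟨a :: p, by simp, h1, hp⟩

theorem exists_sink (hQ : Acyclic t h) (S : Set V) (hS : S.Nonempty) :
    ∃ i ∈ S, ∀ a, t a = i → h a ∉ S := by
  let r : V → V → Prop := fun j i =>
    Relation.TransGen (fun i j : V => ∃ a, t a = i ∧ h a = j) i j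
  have : IsTrans V r := ⟨fun a b c h1 h2 => h2.trans h1⟩
  have : Std.Irrefl r := ⟨fun i hi => by
    obtain ⟨p, hp, hp'⟩ := exists_path hi
    exact hp (hQ i p hp')⟩
  have hwf : WellFounded r := Finite.wellFounded_of_trans_of_irrefl r
  obtain ⟨i, hi, hmin⟩ := hwf.has_min S hS
  exact ⟨i, hi, fun a ha hS => hmin _ hS (Relation.TransGen.single ⟨a, ha, rfl⟩)⟩

theorem exists_start (hQ : Acyclic t h) (W : QuivRep K V A t h)
    (hW : W.dimVec ≠ fun _ => 0) : ∃ P : QuivRep K V A t h, ExtZ P W ∧ ¬ HomZ P W := by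
  obtain ⟨i, hi, hsink⟩ := exists_sink hQ {i | W.dimVec i ≠ 0} (by
    by_contra hcon
    apply hW
    funext i
    by_contra hi
    exact hcon ⟨i, hi⟩)
  have hz : ∀ a, t a = i → Subsingleton (W.sp (h a)) := by
    intro a ha
    have := hsink a ha
    simp only [Set.mem_ofPred_eq, not_not] at this
    exact Module.finrank_zero_iff.mp this
  let U : Sub W :=
    { sub := fun j => if j = i then ⊤ else ⊥
      le := by
        intro a x hx
        by_cases ha : t a = i
        · have := hz a ha
          rw [Subsingleton.elim (W.map a x) 0]
          exact Submodule.zero_mem _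
        · simp only [ha, if_false, Submodule.mem_bot] at hx
          rw [hx, map_zero]
          exact Submodule.zero_mem _ }
  refine ⟨subRep U, ?_, ?_⟩
  · intro ξ
    refine ⟨0, fun a x => ?_⟩
    by_cases ha : t a = i
    · have := hz a ha
      exact Subsingleton.elim _ _
    · have hx : x = 0 := by
        apply Subtype.ext
        have hx2 : x.1 ∈ (if t a = i then (⊤ : Submodule K (W.sp (t a))) else ⊥) := x.2
        rw [if_neg ha] at hx2
        exact hx2
      rw [hx]
      simp
  · intro H
    have h0 := H _ (subIncl_mem U)
    apply hi
    apply Module.finrank_zero_iff.mpr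
    refine ⟨fun x y => ?_⟩
    have hall : ∀ x : W.sp i, x = 0 := fun x =>
      LinearMap.congr_fun (congrFun h0 i) ⟨x, by simp [U]⟩
    rw [hall x, hall y]

theorem ext_self_of_stable (hQ : Acyclic t h) {X W : QuivRep K V A t h} (hX : ExtZ X X)
    (hW : IsStable K (weightL t h (natZ X.dimVec)) W) : ExtZ W W := by
  obtain ⟨h1, h2⟩ := perp_of_stable hX hW
  obtain ⟨P, hP, hP'⟩ := exists_start hQ W hW.2.1
  obtain ⟨n, ξ, hE⟩ := bongartz X P hX
  exact rigid_aux hW h1 _ _ le_rfl (hP.extRep (h2.pow_left n) ξ) hE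
    (extRep_hom hP' (h2.pow_left n) ξ)

/-! Schur's lemma for stable representations. -/

theorem bij_of_stable {σ : V → ℤ} {W : QuivRep K V A t h} (hW : IsStable K σ W)
    (f : ∀ i, W.sp i →ₗ[K] W.sp i) (hf : f ∈ homS W W) (hf0 : f ≠ 0) (i : V) :
    Function.Injective (f i) := by
  have hrk : ∀ i, (rangeSub f hf).dimVec i + (kerSub f hf).dimVec i = W.dimVec i :=
    fun i => LinearMap.finrank_range_add_finrank_ker (f i)
  have hr0 := dim_ne_zero_of_hom f hf hf0
  have hd : (rangeSub f hf).dimVec = W.dimVec := by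
    by_contra hd
    have h1 := hW.2.2 _ hr0 hd
    have h2 := hW.2.2 (kerSub f hf) (by
      intro hk
      apply hd
      funext j
      have := hrk j
      rw [hk] at this
      simpa using this) (by
      intro hk
      apply hr0
      funext j
      have := hrk j
      rw [hk] at this
      simpa using this)
    have h3 : (∑ i, σ i * ((rangeSub f hf).dimVec i : ℤ)) +
        (∑ i, σ i * ((kerSub f hf).dimVec i : ℤ)) = ∑ i, σ i * (W.dimVec i : ℤ) := by
      rw [← Finset.sum_add_distrib]
      refine Finset.sum_congr rfl fun j _ => ?_
      rw [← hrk j]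
      push_cast
      ring
    rw [hW.1] at h3
    omega
  exact LinearMap.injective_iff_surjective.mpr (surj_of_dim f hf hd i)

theorem schur_of_stable [IsAlgClosed K] {σ : V → ℤ} {W : QuivRep K V A t h}
    (hW : IsStable K σ W) : W.IsSchur := by
  obtain ⟨i, hi⟩ : ∃ i, W.dimVec i ≠ 0 := by
    by_contra hcon
    push Not at hcon
    exact hW.2.1 (funext hcon)
  have hnt : Nontrivial (W.sp i) := Module.nontrivial_of_finrank_pos (Nat.pos_of_ne_zero hi)
  have hid : (fun i => (LinearMap.id : W.sp i →ₗ[K] W.sp i)) ∈ homS W W :=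
    mem_homS'.mpr fun _ _ => rfl
  unfold IsSchur homDim
  rw [finrank_eq_one_iff']
  refine ⟨⟨_, hid⟩, ?_, ?_⟩
  · intro h0
    obtain ⟨x, hx⟩ := exists_ne (0 : W.sp i)
    exact hx (LinearMap.congr_fun (congrFun (congrArg Subtype.val h0) i) x)
  · rintro ⟨f, hf⟩
    obtain ⟨c, hc⟩ := Module.End.exists_eigenvalue (f i)
    obtain ⟨v, hv⟩ := hc.exists_hasEigenvector
    refine ⟨c, ?_⟩
    by_contra hne
    have hg : f - c • (fun i => (LinearMap.id : W.sp i →ₗ[K] W.sp i)) ∈ homS W W :=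
      (homS W W).sub_mem hf ((homS W W).smul_mem c hid)
    have hinj := bij_of_stable hW _ hg (by
      intro h0
      apply hne
      apply Subtype.ext
      exact (sub_eq_zero.mp h0).symm) i
    apply hv.2
    apply hinj
    rw [map_zero]
    change f i v - c • v = 0
    rw [hv.apply_eq_smul, sub_self]

/-! Duality. -/

/-- The dual representation, of the opposite quiver. -/
abbrev dualRep (X : QuivRep K V A t h) : QuivRep K V A h t where
  sp i := Module.Dual K (X.sp i)
  map a := (X.map a).dualMap

theorem dualRep_dimVec (X : QuivRep K V A t h) : (dualRep X).dimVec = X.dimVec :=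
  funext fun _ => Subspace.dual_finrank_eq

theorem exists_dualMap {M N : Type} [AddCommGroup M] [Module K M] [AddCommGroup N] [Module K N]
    [FiniteDimensional K N] (g : Module.Dual K N →ₗ[K] Module.Dual K M) :
    ∃ f : M →ₗ[K] N, f.dualMap = g := by
  let e := Module.evalEquiv K N
  refine ⟨e.symm.toLinearMap.comp (g.dualMap.comp (Module.Dual.eval K M)), ?_⟩
  ext ν m
  simp only [LinearMap.dualMap_apply, LinearMap.comp_apply, LinearEquiv.coe_coe]
  have : ∀ y : Module.Dual K (Module.Dual K N), ν (e.symm y) = y ν := by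
    intro y
    obtain ⟨n, rfl⟩ := e.surjective y
    simp [e]
  rw [this]
  rfl

theorem ExtZ.dual {X Y : QuivRep K V A t h} (H : ExtZ X Y) :
    ExtZ (dualRep Y) (dualRep X) := by
  intro ξ
  choose η hη using fun a => exists_dualMap (K := K) (M := X.sp (t a)) (N := Y.sp (h a)) (ξ a)
  obtain ⟨φ, hφ⟩ := H (fun a => - η a)
  refine ⟨fun i => (φ i).dualMap, fun a ν => ?_⟩
  have : ξ a ν = (η a).dualMap ν := by rw [hη]
  rw [this]
  refine LinearMap.ext fun x => ?_
  have h1 := congrArg ν (hφ a x)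
  simp only [map_sub, LinearMap.neg_apply, map_neg] at h1
  change ν (Y.map a (φ (t a) x)) - ν (φ (h a) (X.map a x)) = ν (η a x)
  rw [← neg_inj, ← h1]
  abel

theorem ExtZ.of_dual {X Y : QuivRep K V A t h} (H : ExtZ (dualRep Y) (dualRep X)) :
    ExtZ X Y := by
  intro η
  obtain ⟨ψ, hψ⟩ := H (fun a => - (η a).dualMap)
  choose φ hφ using fun i => exists_dualMap (K := K) (M := X.sp i) (N := Y.sp i) (ψ i)
  refine ⟨φ, fun a x => ?_⟩
  rw [← sub_eq_zero, ← Module.forall_dual_apply_eq_zero_iff K]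
  intro ν
  have h1 := LinearMap.congr_fun (hψ a ν) x
  rw [← hφ, ← hφ] at h1
  change ν (Y.map a (φ (t a) x)) - ν (φ (h a) (X.map a x)) = - ν (η a x) at h1
  rw [map_sub, map_sub, ← neg_neg (ν (η a x)), ← h1]
  abel

theorem IsStable.dual {σ : V → ℤ} {W : QuivRep K V A t h} (hW : IsStable K σ W) :
    IsStable K (-σ) (dualRep W) := by
  obtain ⟨h1, h2, h3⟩ := hW
  refine ⟨?_, ?_, ?_⟩
  · rw [dualRep_dimVec]
    simp [h1]
  · rwa [dualRep_dimVec]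
  · intro U hU0 hU1
    rw [dualRep_dimVec] at hU1
    let C : Sub W :=
      { sub := fun i => (U.sub i : Submodule K (Module.Dual K (W.sp i))).dualCoannihilator
        le := by
          intro a x hx
          rw [Submodule.mem_dualCoannihilator] at hx ⊢
          intro ν hν
          exact hx _ (U.le a ν hν) }
    have hdim : ∀ i, U.dimVec i + C.dimVec i = W.dimVec i := fun i =>
      Subspace.finrank_add_finrank_dualCoannihilator_eq
        (U.sub i : Submodule K (Module.Dual K (W.sp i)))
    have h4 := h3 C (by
      intro hk
      apply hU1
      funext j
      have := hdim j
      rw [hk] at this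
      simpa using this) (by
      intro hk
      apply hU0
      funext j
      have := hdim j
      rw [hk] at this
      simpa using this)
    have h5 : (∑ i, σ i * (U.dimVec i : ℤ)) + (∑ i, σ i * (C.dimVec i : ℤ))
        = ∑ i, σ i * (W.dimVec i : ℤ) := by
      rw [← Finset.sum_add_distrib]
      refine Finset.sum_congr rfl fun j _ => ?_
      rw [← hdim j]
      push_cast
      ring
    rw [h1] at h5
    have h6 : (∑ i, (-σ) i * (U.dimVec i : ℤ)) = - ∑ i, σ i * (U.dimVec i : ℤ) := by
      simp
    rw [h6]
    omega

theorem weightR_eq (α : V → ℤ) : - weightR t h α = weightL h t α := by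
  funext i
  simp only [Pi.neg_apply, weightR, weightL, eulerForm, neg_neg]
  congr 1 <;> exact Finset.sum_congr rfl fun _ _ => mul_comm _ _

theorem path_append {i j k : V} {p q : List A} (hp : IsPathFrom t h i p j)
    (hq : IsPathFrom t h j q k) : IsPathFrom t h i (p ++ q) k := by
  induction p generalizing i with
  | nil =>
    change i = j at hp
    subst hp
    exact hq
  | cons a p ih => exact ⟨hp.1, ih hp.2⟩

theorem path_reverse {i j : V} {p : List A} (hp : IsPathFrom h t i p j) :
    IsPathFrom t h j p.reverse i := by
  induction p generalizing i with
  | nil => exact Eq.symm hp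
  | cons a p ih =>
    rw [List.reverse_cons]
    exact path_append (ih hp.2) ⟨rfl, hp.1⟩

theorem Acyclic.op (hQ : Acyclic t h) : Acyclic h t := by
  intro i p hp
  exact List.reverse_eq_nil_iff.mp (hQ i _ (path_reverse hp))

end Aux

/-- If `α` is pre-homogeneous and `σ = ⟨α,·⟩` or `σ = −⟨·,α⟩`, then any
dimension vector admitting a `σ`-stable representation is a real Schur root. -/
theorem stmt2 [IsAlgClosed K] [CharZero K] (t h : A → V) (hQ : Acyclic t h)
    (α : V → ℕ) (hpre : ∃ X : QuivRep K V A t h, X.dimVec = α ∧ X.IsRigid)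
    (σ : V → ℤ) (hσ : σ = weightL t h (natZ α) ∨ σ = weightR t h (natZ α))
    (δ : V → ℕ) (hδ : ∃ X : QuivRep K V A t h, X.dimVec = δ ∧ IsStable K σ X) :
    isRealSchurRoot K t h δ := by
  obtain ⟨X, rfl, hX⟩ := hpre
  obtain ⟨W, rfl, hW⟩ := hδ
  have hX' : ExtZ X X := extDim_eq_zero.mp hX
  refine ⟨W, rfl, ?_, schur_of_stable hW⟩
  apply extDim_eq_zero.mpr
  rcases hσ with rfl | rfl
  · exact ext_self_of_stable hQ hX' hW
  · have h1 := IsStable.dual hW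
    rw [weightR_eq, ← dualRep_dimVec] at h1
    exact ExtZ.of_dual (ext_self_of_stable hQ.op hX'.dual h1)

end
end
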